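/- Let Φ be a real-valued function on symmetric t×t real matrices that is concave, invariant under conjugation by permutation matrices (Φ(S′CS) = Φ(C) for every t×t permutation matrix S), and nondecreasing with respect to the Loewner order. Let λ0 ∈ ℝ and τ0 ∈ ℝ^t with 1_t′τ0 = 0 and τ0 ≠ 0, and let d be a design with (στ0)′ C_{d22} (στ0) > 0 for every permutation σ. Then there exists a symmetric design d* (namely the design with weights p*_s = (1/t!) ∑_σ p_{σ⁻¹∘s}) such that (στ0)′ C_{d*22} (στ0) > 0 for every σ and (1/t!) ∑_σ Φ(C_{d,στ0,λ0}) ≤ (1/t!) ∑_σ Φ(C_{d*,στ0,λ0}). -/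

import Mathlib

open Matrix MeasureTheory
open scoped Classical

noncomputable section

/-- A treatment sequence: assigns a treatment in `Fin t` to each period in `Fin p`. -/
abbrev TrtSeq (p t : ℕ) := Fin p → Fin t

/-- Treatment/period incidence matrix `T_s`. -/
def Tmat {p t : ℕ} (s : TrtSeq p t) : Matrix (Fin p) (Fin t) ℝ :=
  Matrix.of fun k i => if s k = i then 1 else 0

/-- Carryover incidence matrix `F_s`: first row zero, row `k` records the treatment
in period `k-1`. -/
def Fmat {p t : ℕ} (s : TrtSeq p t) : Matrix (Fin p) (Fin t) ℝ :=
  Matrix.of fun k i =>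
    if (k : ℕ) = 0 then 0
    else if s ⟨(k : ℕ) - 1, Nat.lt_of_le_of_lt (Nat.sub_le _ _) k.isLt⟩ = i then 1 else 0

/-- The all-ones `m × m` matrix `J_m`. -/
def Jmat (m : ℕ) : Matrix (Fin m) (Fin m) ℝ := Matrix.of fun _ _ => 1

/-- `B_t = I_t - J_t / t`. -/
def Bmat (t : ℕ) : Matrix (Fin t) (Fin t) ℝ := 1 - ((t : ℝ))⁻¹ • Jmat t

/-- `B̃ = Σ⁻¹ - Σ⁻¹ J_p Σ⁻¹ / (1_p' Σ⁻¹ 1_p)`. -/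
def Btil {p : ℕ} (S : Matrix (Fin p) (Fin p) ℝ) : Matrix (Fin p) (Fin p) ℝ :=
  S⁻¹ - (((fun _ => (1 : ℝ)) : Fin p → ℝ) ⬝ᵥ (S⁻¹ *ᵥ fun _ => (1 : ℝ)))⁻¹ •
    (S⁻¹ * Jmat p * S⁻¹)

/-- `G_1(s) = T_s`, `G_2(s) = F_s`. -/
def Gmat {p t : ℕ} (i : Fin 2) (s : TrtSeq p t) : Matrix (Fin p) (Fin t) ℝ :=
  if i = 0 then Tmat s else Fmat s

/-- An approximate design: nonnegative weights summing to one. -/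
def IsDesign {p t : ℕ} (w : TrtSeq p t → ℝ) : Prop :=
  (∀ s, 0 ≤ w s) ∧ ∑ s : TrtSeq p t, w s = 1

/-- `Ĉ_{sij} = B_t G_i(s)' B̃ G_j(s) B_t`. -/
def Chat {p t : ℕ} (S : Matrix (Fin p) (Fin p) ℝ) (s : TrtSeq p t) (i j : Fin 2) :
    Matrix (Fin t) (Fin t) ℝ :=
  Bmat t * (Gmat i s)ᵀ * Btil S * Gmat j s * Bmat t

/-- `c_{sij} = tr Ĉ_{sij}`. -/
def cseq {p t : ℕ} (S : Matrix (Fin p) (Fin p) ℝ) (s : TrtSeq p t) (i j : Fin 2) : ℝ :=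
  (Chat S s i j).trace

/-- `Ĉ_{dij} = n ∑_s p_s Ĉ_{sij}`. -/
def ChatD {p t : ℕ} (n : ℕ) (S : Matrix (Fin p) (Fin p) ℝ) (w : TrtSeq p t → ℝ)
    (i j : Fin 2) : Matrix (Fin t) (Fin t) ℝ :=
  (n : ℝ) • ∑ s : TrtSeq p t, w s • Chat S s i j

/-- `C_{dij} = Ĉ_{dij} - n (∑_s p_s G_i(s) B_t)' B̃ (∑_s p_s G_j(s) B_t)`. -/
def CD {p t : ℕ} (n : ℕ) (S : Matrix (Fin p) (Fin p) ℝ) (w : TrtSeq p t → ℝ)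
    (i j : Fin 2) : Matrix (Fin t) (Fin t) ℝ :=
  ChatD n S w i j -
    (n : ℝ) • ((∑ s : TrtSeq p t, w s • (Gmat i s * Bmat t))ᵀ * Btil S *
      (∑ s : TrtSeq p t, w s • (Gmat j s * Bmat t)))

/-- `c_{dij} = tr Ĉ_{dij} = n ∑_s p_s c_{sij}`. -/
def cD {p t : ℕ} (n : ℕ) (S : Matrix (Fin p) (Fin p) ℝ) (w : TrtSeq p t → ℝ)
    (i j : Fin 2) : ℝ :=
  (ChatD n S w i j).trace

/-- Fisher information matrix `C_{d,τ0,λ0}` for the direct treatment effects under the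
proportional model. -/
def CInfo {p t : ℕ} (n : ℕ) (S : Matrix (Fin p) (Fin p) ℝ) (w : TrtSeq p t → ℝ)
    (τ0 : Fin t → ℝ) (l0 : ℝ) : Matrix (Fin t) (Fin t) ℝ :=
  CD n S w 0 0 + l0 • (CD n S w 0 1 + CD n S w 1 0) + (l0 ^ 2) • CD n S w 1 1 -
    (τ0 ⬝ᵥ (CD n S w 1 1 *ᵥ τ0))⁻¹ •
      ((CD n S w 0 1 + l0 • CD n S w 1 1) * vecMulVec τ0 τ0 *
        (CD n S w 1 0 + l0 • CD n S w 1 1))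

/-- Permutation matrix `S_σ` with `(S_σ)_{j,i} = 1` iff `i = σ j`. -/
def Smat {t : ℕ} (σ : Equiv.Perm (Fin t)) : Matrix (Fin t) (Fin t) ℝ :=
  Matrix.of fun j i => if i = σ j then 1 else 0

/-- The relabelled sequence `σ ∘ s`. -/
def permSeq {p t : ℕ} (σ : Equiv.Perm (Fin t)) (s : TrtSeq p t) : TrtSeq p t := fun k => σ (s k)

/-- The design `σ d`, with weights `(σd)_s = p_{σ⁻¹ ∘ s}`. -/
def permDesign {p t : ℕ} (σ : Equiv.Perm (Fin t)) (w : TrtSeq p t → ℝ) : TrtSeq p t → ℝ :=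
  fun s => w (permSeq σ⁻¹ s)

/-- A design is symmetric if its weights are invariant under treatment relabelling. -/
def IsSymmetricDesign {p t : ℕ} (w : TrtSeq p t → ℝ) : Prop :=
  ∀ (σ : Equiv.Perm (Fin t)) (s : TrtSeq p t), w (permSeq σ s) = w s

/-- The symmetrized design `d*` with weights `p*_s = (1/t!) ∑_σ p_{σ⁻¹ ∘ s}`. -/
def symmetrize {p t : ℕ} (w : TrtSeq p t → ℝ) : TrtSeq p t → ℝ :=
  fun s => ((Nat.factorial t : ℝ))⁻¹ * ∑ σ : Equiv.Perm (Fin t), permDesign σ w s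

/-- `q_s(x) = c_{s11} + 2 c_{s12} x + c_{s22} x²`. -/
def qSeq {p t : ℕ} (S : Matrix (Fin p) (Fin p) ℝ) (s : TrtSeq p t) (x : ℝ) : ℝ :=
  cseq S s 0 0 + 2 * cseq S s 0 1 * x + cseq S s 1 1 * x ^ 2

/-- `q(x) = max_{s ∈ S} q_s(x)`. -/
def qMax (p t : ℕ) (S : Matrix (Fin p) (Fin p) ℝ) (x : ℝ) : ℝ :=
  sSup (Set.range fun s : TrtSeq p t => qSeq S s x)

/-- `y* = inf_x q(x)`. -/
def yStar (p t : ℕ) (S : Matrix (Fin p) (Fin p) ℝ) : ℝ := ⨅ x : ℝ, qMax p t S x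

/-- `q_d(x) = ∑_s p_s q_s(x)`. -/
def qD {p t : ℕ} (S : Matrix (Fin p) (Fin p) ℝ) (w : TrtSeq p t → ℝ) (x : ℝ) : ℝ :=
  ∑ s : TrtSeq p t, w s * qSeq S s x

/-- `x_d = -c_{d12}/c_{d22}`. -/
def xD {p t : ℕ} (n : ℕ) (S : Matrix (Fin p) (Fin p) ℝ) (w : TrtSeq p t → ℝ) : ℝ :=
  -(cD n S w 0 1) / cD n S w 1 1

/-- An exchangeable prior: a probability measure on `{τ : 1'τ = 0, τ ≠ 0}` that is
invariant under all coordinate permutations of `ℝ^t`. -/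
def IsExchangeablePrior {t : ℕ} (g : Measure (Fin t → ℝ)) : Prop :=
  IsProbabilityMeasure g ∧
    g {τ : Fin t → ℝ | ¬((∑ i, τ i) = 0 ∧ τ ≠ 0)} = 0 ∧
    ∀ σ : Equiv.Perm (Fin t), Measure.map (fun τ i => τ (σ i)) g = g

/-- `m_d(τ0) = min {ℓ' C_{d,τ0,λ0} ℓ : 1'ℓ = 0, ℓ'ℓ = 1}`. -/
def mD {p t : ℕ} (n : ℕ) (S : Matrix (Fin p) (Fin p) ℝ) (w : TrtSeq p t → ℝ) (l0 : ℝ)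
    (τ0 : Fin t → ℝ) : ℝ :=
  sInf {v : ℝ | ∃ l : Fin t → ℝ, (∑ i, l i) = 0 ∧ l ⬝ᵥ l = 1 ∧
    v = l ⬝ᵥ (CInfo n S w τ0 l0 *ᵥ l)}

/-- The E-criterion value `E_{g,λ0}(d) = ∫ m_d(τ0) g(dτ0)`. -/
def Ecrit {p t : ℕ} (n : ℕ) (S : Matrix (Fin p) (Fin p) ℝ) (g : Measure (Fin t → ℝ))
    (l0 : ℝ) (w : TrtSeq p t → ℝ) : ℝ :=
  ∫ τ0, mD n S w l0 τ0 ∂g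

/-- Competing designs for E-optimality: designs with a.e. positive `τ0' C_{d22} τ0`
and `g`-integrable `m_d`. -/
def EAdmissible {p t : ℕ} (n : ℕ) (S : Matrix (Fin p) (Fin p) ℝ) (g : Measure (Fin t → ℝ))
    (l0 : ℝ) (w : TrtSeq p t → ℝ) : Prop :=
  IsDesign w ∧ (∀ᵐ τ0 ∂g, 0 < τ0 ⬝ᵥ (CD n S w 1 1 *ᵥ τ0)) ∧
    Integrable (mD n S w l0) g

/-- `d` is `E_{g,λ0}`-optimal. -/
def EOptimal {p t : ℕ} (n : ℕ) (S : Matrix (Fin p) (Fin p) ℝ) (g : Measure (Fin t → ℝ))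
    (l0 : ℝ) (w : TrtSeq p t → ℝ) : Prop :=
  ∀ w' : TrtSeq p t → ℝ, EAdmissible n S g l0 w' → Ecrit n S g l0 w' ≤ Ecrit n S g l0 w

/-- A pseudo symmetric design: treatments equireplicated in each period,
and all `C_{dij}` completely symmetric. -/
def IsPseudoSymmetric {p t : ℕ} (n : ℕ) (S : Matrix (Fin p) (Fin p) ℝ)
    (w : TrtSeq p t → ℝ) : Prop :=
  (∀ (k : Fin p) (i : Fin t),
    (∑ s ∈ Finset.univ.filter fun s : TrtSeq p t => s k = i, w s) = 1 / (t : ℝ)) ∧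
  ∀ i j : Fin 2, ∃ a b : ℝ, CD n S w i j = a • (1 : Matrix (Fin t) (Fin t) ℝ) + b • Jmat t

/-- Eigenvalues of a (Hermitian) matrix sorted increasingly with multiplicity. -/
def sortedEigs {t : ℕ} (C : Matrix (Fin t) (Fin t) ℝ) : Fin t → ℝ :=
  if h : C.IsHermitian then (fun i => h.eigenvalues (Tuple.sort h.eigenvalues i))
  else fun _ => 0

/-- `Φ_D(C) = (∏_{i=1}^{t-1} a_i)^{1/(t-1)}` (eigenvalues sorted increasingly). -/
def PhiD {t : ℕ} (C : Matrix (Fin t) (Fin t) ℝ) : ℝ :=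
  (∏ i ∈ Finset.univ.filter fun i : Fin t => (i : ℕ) ≠ 0, sortedEigs C i) ^ (((t : ℝ) - 1)⁻¹)

/-- `Φ_A(C) = (t-1)(∑_{i=1}^{t-1} a_i⁻¹)⁻¹` if `a_1 > 0`, else `0`. -/
def PhiA {t : ℕ} (C : Matrix (Fin t) (Fin t) ℝ) : ℝ :=
  if ∀ i : Fin t, (i : ℕ) ≠ 0 → 0 < sortedEigs C i then
    ((t : ℝ) - 1) *
      (∑ i ∈ Finset.univ.filter fun i : Fin t => (i : ℕ) ≠ 0, (sortedEigs C i)⁻¹)⁻¹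
  else 0

/-- `Φ_T(C) = tr(C)/(t-1)`. -/
def PhiT {t : ℕ} (C : Matrix (Fin t) (Fin t) ℝ) : ℝ := C.trace / ((t : ℝ) - 1)

/-- The criterion value `∫ Φ(C_{d,τ0,λ0}) g(dτ0)`. -/
def PhiCrit {p t : ℕ} (n : ℕ) (S : Matrix (Fin p) (Fin p) ℝ)
    (Phi : Matrix (Fin t) (Fin t) ℝ → ℝ) (g : Measure (Fin t → ℝ)) (l0 : ℝ)
    (w : TrtSeq p t → ℝ) : ℝ :=
  ∫ τ0, Phi (CInfo n S w τ0 l0) ∂g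

/-- Competing designs for a `Φ`-criterion. -/
def PhiAdmissible {p t : ℕ} (n : ℕ) (S : Matrix (Fin p) (Fin p) ℝ)
    (Phi : Matrix (Fin t) (Fin t) ℝ → ℝ) (g : Measure (Fin t → ℝ)) (l0 : ℝ)
    (w : TrtSeq p t → ℝ) : Prop :=
  IsDesign w ∧ (∀ᵐ τ0 ∂g, 0 < τ0 ⬝ᵥ (CD n S w 1 1 *ᵥ τ0)) ∧
    Integrable (fun τ0 => Phi (CInfo n S w τ0 l0)) g

/-- `d` is `Φ_{g,λ0}`-optimal. -/
def PhiOptimal {p t : ℕ} (n : ℕ) (S : Matrix (Fin p) (Fin p) ℝ)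
    (Phi : Matrix (Fin t) (Fin t) ℝ → ℝ) (g : Measure (Fin t → ℝ)) (l0 : ℝ)
    (w : TrtSeq p t → ℝ) : Prop :=
  ∀ w' : TrtSeq p t → ℝ, PhiAdmissible n S Phi g l0 w' →
    PhiCrit n S Phi g l0 w' ≤ PhiCrit n S Phi g l0 w

/-- `H_1(s) = F_s`, `H_2(s) = T_s + λ0 F_s` (for estimating `λ`). -/
def Hmat {p t : ℕ} (l0 : ℝ) (i : Fin 2) (s : TrtSeq p t) : Matrix (Fin p) (Fin t) ℝ :=
  if i = 0 then Fmat s else Tmat s + l0 • Fmat s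

/-- `Â_{sij} = B_t H_i(s)' B̃ H_j(s) B_t`. -/
def Ahat {p t : ℕ} (S : Matrix (Fin p) (Fin p) ℝ) (l0 : ℝ) (s : TrtSeq p t) (i j : Fin 2) :
    Matrix (Fin t) (Fin t) ℝ :=
  Bmat t * (Hmat l0 i s)ᵀ * Btil S * Hmat l0 j s * Bmat t

/-- `h_{sij} = tr Â_{sij}`. -/
def hseq {p t : ℕ} (S : Matrix (Fin p) (Fin p) ℝ) (l0 : ℝ) (s : TrtSeq p t) (i j : Fin 2) : ℝ :=
  (Ahat S l0 s i j).trace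

/-- `Â_{dij} = n ∑_s p_s Â_{sij}`. -/
def AhatD {p t : ℕ} (n : ℕ) (S : Matrix (Fin p) (Fin p) ℝ) (l0 : ℝ) (w : TrtSeq p t → ℝ)
    (i j : Fin 2) : Matrix (Fin t) (Fin t) ℝ :=
  (n : ℝ) • ∑ s : TrtSeq p t, w s • Ahat S l0 s i j

/-- `A_{dij} = Â_{dij} - n (∑_s p_s H_i(s) B_t)' B̃ (∑_s p_s H_j(s) B_t)`. -/
def AD {p t : ℕ} (n : ℕ) (S : Matrix (Fin p) (Fin p) ℝ) (l0 : ℝ) (w : TrtSeq p t → ℝ)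
    (i j : Fin 2) : Matrix (Fin t) (Fin t) ℝ :=
  AhatD n S l0 w i j -
    (n : ℝ) • ((∑ s : TrtSeq p t, w s • (Hmat l0 i s * Bmat t))ᵀ * Btil S *
      (∑ s : TrtSeq p t, w s • (Hmat l0 j s * Bmat t)))

/-- `G` is a generalized inverse of `A`. -/
def IsGInv {t : ℕ} (A G : Matrix (Fin t) (Fin t) ℝ) : Prop := A * G * A = A

/-- `A_d(G) = A_{d11} - A_{d12} G A_{d21}` with `A_{d21} = A_{d12}'`. -/
def ADfun {p t : ℕ} (n : ℕ) (S : Matrix (Fin p) (Fin p) ℝ) (l0 : ℝ) (w : TrtSeq p t → ℝ)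
    (G : Matrix (Fin t) (Fin t) ℝ) : Matrix (Fin t) (Fin t) ℝ :=
  AD n S l0 w 0 0 - AD n S l0 w 0 1 * G * (AD n S l0 w 0 1)ᵀ

/-- `r_s(x) = h_{s11} + 2 h_{s12} x + h_{s22} x²`. -/
def rSeq {p t : ℕ} (S : Matrix (Fin p) (Fin p) ℝ) (l0 : ℝ) (s : TrtSeq p t) (x : ℝ) : ℝ :=
  hseq S l0 s 0 0 + 2 * hseq S l0 s 0 1 * x + hseq S l0 s 1 1 * x ^ 2

/-- `r(x) = max_s r_s(x)`. -/
def rMax (p t : ℕ) (S : Matrix (Fin p) (Fin p) ℝ) (l0 : ℝ) (x : ℝ) : ℝ :=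
  sSup (Set.range fun s : TrtSeq p t => rSeq S l0 s x)

/-- `y_0 = inf_x r(x)`. -/
def yZero (p t : ℕ) (S : Matrix (Fin p) (Fin p) ℝ) (l0 : ℝ) : ℝ := ⨅ x : ℝ, rMax p t S l0 x


theorem Btil_isSymm {p : ℕ} {S : Matrix (Fin p) (Fin p) ℝ} (hS : S.PosDef) :
    (Btil S)ᵀ = Btil S := by
  have h1 : (S⁻¹)ᵀ = S⁻¹ := by
    have := hS.inv.isHermitian
    simpa [Matrix.IsHermitian, Matrix.conjTranspose_eq_transpose_of_trivial] using this
  have hJ : (Jmat p)ᵀ = Jmat p := by ext i j; simp [Jmat]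
  unfold Btil
  rw [Matrix.transpose_sub, Matrix.transpose_smul, Matrix.transpose_mul, Matrix.transpose_mul,
    h1, hJ, Matrix.mul_assoc]

theorem Btil_nonneg {p : ℕ} (hp : 2 ≤ p) {S : Matrix (Fin p) (Fin p) ℝ} (hS : S.PosDef)
    (x : Fin p → ℝ) : 0 ≤ x ⬝ᵥ (Btil S *ᵥ x) := by
  have h1 : (S⁻¹)ᵀ = S⁻¹ := by
    have := hS.inv.isHermitian
    simpa [Matrix.IsHermitian, Matrix.conjTranspose_eq_transpose_of_trivial] using this
  have hpos := hS.inv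
  unfold Btil
  set P := S⁻¹ with hP
  set e : Fin p → ℝ := fun _ => 1 with he
  have hJ : Jmat p = vecMulVec e e := by ext i j; simp [Jmat, vecMulVec, he]
  have hcomm : ∀ a b : Fin p → ℝ, a ⬝ᵥ (P *ᵥ b) = b ⬝ᵥ (P *ᵥ a) := by
    intro a b
    rw [Matrix.dotProduct_mulVec, ← Matrix.mulVec_transpose, h1, dotProduct_comm]
  have hα : 0 < e ⬝ᵥ (P *ᵥ e) := by
    have hne : e ≠ 0 := by
      intro h
      have := congrFun h ⟨0, by omega⟩
      simp [he] at this
    simpa using hpos.dotProduct_mulVec_pos hne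
  have hq := hpos.posSemidef.dotProduct_mulVec_nonneg
    (x - ((e ⬝ᵥ (P *ᵥ x)) / (e ⬝ᵥ (P *ᵥ e))) • e)
  simp only [star_trivial, Matrix.mulVec_sub, Matrix.mulVec_smul, sub_dotProduct,
    dotProduct_sub, smul_dotProduct, dotProduct_smul, smul_eq_mul] at hq
  rw [hcomm x e] at hq
  have hx : x ⬝ᵥ ((P - (e ⬝ᵥ (P *ᵥ e))⁻¹ • (P * Jmat p * P)) *ᵥ x)
      = x ⬝ᵥ (P *ᵥ x) - (e ⬝ᵥ (P *ᵥ e))⁻¹ * ((e ⬝ᵥ (P *ᵥ x)) * (e ⬝ᵥ (P *ᵥ x))) := by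
    rw [Matrix.sub_mulVec, dotProduct_sub, Matrix.smul_mulVec, dotProduct_smul, hJ,
      ← Matrix.mulVec_mulVec, ← Matrix.mulVec_mulVec, Matrix.vecMulVec_mulVec]
    simp only [Matrix.mulVec_smul, dotProduct_smul, op_smul_eq_smul, smul_eq_mul]
    rw [hcomm x e]
  rw [hx]
  refine hq.trans (le_of_eq ?_)
  field_simp
  ring

/-- weighted bilinear covariance form -/
def Vb {p t : ℕ} (n : ℕ) (M : Matrix (Fin p) (Fin p) ℝ) (w : TrtSeq p t → ℝ)
    (a b : TrtSeq p t → Fin p → ℝ) : ℝ :=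
  (n : ℝ) * (∑ s, w s * (a s ⬝ᵥ (M *ᵥ b s)) - (∑ s, w s • a s) ⬝ᵥ (M *ᵥ (∑ s, w s • b s)))

section
variable {p t : ℕ} (n : ℕ) (M : Matrix (Fin p) (Fin p) ℝ) (w : TrtSeq p t → ℝ)
  (a a' b b' : TrtSeq p t → Fin p → ℝ) (c : ℝ)

theorem Vb_add_left : Vb n M w (a + a') b = Vb n M w a b + Vb n M w a' b := by
  simp only [Vb, Pi.add_apply, add_dotProduct, smul_add, Finset.sum_add_distrib, mul_add]
  ring

theorem Vb_add_right : Vb n M w a (b + b') = Vb n M w a b + Vb n M w a b' := by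
  simp only [Vb, Pi.add_apply, dotProduct_add, Matrix.mulVec_add, smul_add,
    Finset.sum_add_distrib, mul_add]
  ring

theorem Vb_smul_left : Vb n M w (c • a) b = c * Vb n M w a b := by
  have h : ∑ s, w s • (c • a) s = c • ∑ s, w s • a s := by
    rw [Finset.smul_sum]; exact Finset.sum_congr rfl fun s _ => smul_comm (w s) c (a s)
  have h2 : ∑ s, w s * ((c • a) s ⬝ᵥ (M *ᵥ b s)) = c * ∑ s, w s * (a s ⬝ᵥ (M *ᵥ b s)) := by
    rw [Finset.mul_sum]
    refine Finset.sum_congr rfl fun s _ => ?_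
    simp only [Pi.smul_apply, smul_dotProduct, smul_eq_mul]; ring
  rw [Vb, h, h2, smul_dotProduct, smul_eq_mul, Vb]; ring

theorem Vb_comm (hM : Mᵀ = M) : Vb n M w a b = Vb n M w b a := by
  have hcomm : ∀ a b : Fin p → ℝ, a ⬝ᵥ (M *ᵥ b) = b ⬝ᵥ (M *ᵥ a) := by
    intro a b
    rw [Matrix.dotProduct_mulVec, ← Matrix.mulVec_transpose, hM, dotProduct_comm]
  unfold Vb
  rw [hcomm (∑ s, w s • a s)]
  simp only [hcomm (a _)]

theorem Vb_smul_right (hM : Mᵀ = M) : Vb n M w a (c • b) = c * Vb n M w a b := by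
  rw [Vb_comm n M w _ _ hM, Vb_smul_left, Vb_comm n M w _ _ hM]

end

theorem quad_convex {p : ℕ} (M : Matrix (Fin p) (Fin p) ℝ) (hM : Mᵀ = M)
    (h : ∀ x, 0 ≤ x ⬝ᵥ (M *ᵥ x)) :
    ConvexOn ℝ Set.univ (fun x : Fin p → ℝ => x ⬝ᵥ (M *ᵥ x)) := by
  refine ⟨convex_univ, ?_⟩
  intro x _ y _ α β hα hβ hαβ
  have h1 := mul_nonneg (mul_nonneg hα hβ) (h (x - y))
  have hcomm : x ⬝ᵥ (M *ᵥ y) = y ⬝ᵥ (M *ᵥ x) := by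
    rw [Matrix.dotProduct_mulVec, ← Matrix.mulVec_transpose, hM, dotProduct_comm]
  simp only [Matrix.mulVec_sub, sub_dotProduct, dotProduct_sub, Matrix.mulVec_add, add_dotProduct,
    dotProduct_add, Matrix.mulVec_smul, smul_dotProduct, dotProduct_smul, smul_eq_mul] at h1 ⊢
  rw [hcomm] at h1 ⊢
  obtain rfl : β = 1 - α := by linarith
  nlinarith

theorem Vb_concave {p t : ℕ} (n : ℕ) (M : Matrix (Fin p) (Fin p) ℝ) (hM : Mᵀ = M)
    (h : ∀ x, 0 ≤ x ⬝ᵥ (M *ᵥ x)) (a : TrtSeq p t → Fin p → ℝ) :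
    ConcaveOn ℝ Set.univ (fun w : TrtSeq p t → ℝ => Vb n M w a a) := by
  refine ⟨convex_univ, ?_⟩
  intro w _ w' _ α β hα hβ hαβ
  have h1 := (quad_convex M hM h).2 (Set.mem_univ (∑ s, w s • a s))
    (Set.mem_univ (∑ s, w' s • a s)) hα hβ hαβ
  have e1 : ∑ s, (α • w + β • w') s • a s = α • ∑ s, w s • a s + β • ∑ s, w' s • a s := by
    simp only [Pi.add_apply, Pi.smul_apply, add_smul, Finset.sum_add_distrib, Finset.smul_sum,
      smul_assoc]
  have e2 : ∑ s, (α • w + β • w') s * (a s ⬝ᵥ (M *ᵥ a s))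
      = α * ∑ s, w s * (a s ⬝ᵥ (M *ᵥ a s)) + β * ∑ s, w' s * (a s ⬝ᵥ (M *ᵥ a s)) := by
    simp only [Pi.add_apply, Pi.smul_apply, add_mul, Finset.sum_add_distrib, Finset.mul_sum,
      smul_eq_mul, mul_assoc]
  have hn : (0 : ℝ) ≤ n := Nat.cast_nonneg n
  simp only [Vb, e1, e2, smul_eq_mul] at h1 ⊢
  nlinarith [mul_le_mul_of_nonneg_left h1 hn]

theorem Bmat_transpose (t : ℕ) : (Bmat t)ᵀ = Bmat t := by
  have hJ : (Jmat t)ᵀ = Jmat t := by ext i j; simp [Jmat]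
  simp [Bmat, hJ]

/-- the vectors entering the covariance form -/
def gv {p t : ℕ} (i : Fin 2) (l : Fin t → ℝ) : TrtSeq p t → Fin p → ℝ :=
  fun s => (Gmat i s * Bmat t) *ᵥ l

theorem sum_mulVec_aux {ι : Type*} [Fintype ι] {m k : ℕ} (A : ι → Matrix (Fin m) (Fin k) ℝ)
    (v : Fin k → ℝ) : (∑ s, A s) *ᵥ v = ∑ s, A s *ᵥ v :=
  map_sum (Matrix.mulVecBilin ℝ ℝ |>.flip v) A Finset.univ

theorem CD_form {p t : ℕ} (n : ℕ) (S : Matrix (Fin p) (Fin p) ℝ) (w : TrtSeq p t → ℝ)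
    (i j : Fin 2) (l m : Fin t → ℝ) :
    l ⬝ᵥ (CD n S w i j *ᵥ m) = Vb n (Btil S) w (gv i l) (gv j m) := by
  have key : ∀ A B : Matrix (Fin p) (Fin t) ℝ,
      l ⬝ᵥ ((Aᵀ * Btil S * B) *ᵥ m) = (A *ᵥ l) ⬝ᵥ (Btil S *ᵥ (B *ᵥ m)) := by
    intro A B
    rw [← Matrix.mulVec_mulVec, ← Matrix.mulVec_mulVec, Matrix.dotProduct_mulVec,
      Matrix.vecMul_transpose]
  have hs : ∀ (i : Fin 2) (l : Fin t → ℝ), (∑ s : TrtSeq p t, w s • (Gmat i s * Bmat t)) *ᵥ l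
      = ∑ s, w s • gv i l s := by
    intro i l
    rw [sum_mulVec_aux]
    simp only [Matrix.smul_mulVec, gv]
  have hc : ∀ s : TrtSeq p t, l ⬝ᵥ (Chat S s i j *ᵥ m) = gv i l s ⬝ᵥ (Btil S *ᵥ gv j m s) := by
    intro s
    have : Chat S s i j = (Gmat i s * Bmat t)ᵀ * Btil S * (Gmat j s * Bmat t) := by
      rw [Chat, Matrix.transpose_mul, Bmat_transpose]
      simp only [Matrix.mul_assoc]
    rw [this, key]; rfl
  rw [CD, Matrix.sub_mulVec, dotProduct_sub, Matrix.smul_mulVec, dotProduct_smul, key, hs, hs,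
    ChatD, Matrix.smul_mulVec, dotProduct_smul, sum_mulVec_aux, dotProduct_sum]
  simp only [Matrix.smul_mulVec, dotProduct_smul, hc, smul_eq_mul, Vb]
  ring

theorem CD_transpose {p t : ℕ} (n : ℕ) {S : Matrix (Fin p) (Fin p) ℝ} (hS : S.PosDef)
    (w : TrtSeq p t → ℝ) (i j : Fin 2) : (CD n S w i j)ᵀ = CD n S w j i := by
  simp only [CD, ChatD, Chat, Matrix.transpose_sub, Matrix.transpose_smul, Matrix.transpose_mul,
    Matrix.transpose_sum, Bmat_transpose, Btil_isSymm hS, Matrix.transpose_transpose,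
    Matrix.mul_assoc]

theorem CInfo_symm {p t : ℕ} (n : ℕ) {S : Matrix (Fin p) (Fin p) ℝ} (hS : S.PosDef)
    (w : TrtSeq p t → ℝ) (τ : Fin t → ℝ) (l0 : ℝ) : (CInfo n S w τ l0).IsSymm := by
  have hv : (vecMulVec τ τ)ᵀ = vecMulVec τ τ := by
    ext i j; simp [vecMulVec, mul_comm]
  unfold Matrix.IsSymm CInfo
  simp only [Matrix.transpose_sub, Matrix.transpose_add, Matrix.transpose_smul,
    Matrix.transpose_mul, CD_transpose n hS, hv, Matrix.mul_assoc]
  rw [add_comm (CD n S w 1 0) (CD n S w 0 1)]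

theorem CInfo_form {p t : ℕ} (n : ℕ) {S : Matrix (Fin p) (Fin p) ℝ} (hS : S.PosDef)
    (w : TrtSeq p t → ℝ) (τ : Fin t → ℝ) (l0 : ℝ) (l : Fin t → ℝ)
    (hZ : 0 < τ ⬝ᵥ (CD n S w 1 1 *ᵥ τ)) :
    (∀ c : ℝ, l ⬝ᵥ (CInfo n S w τ l0 *ᵥ l) ≤
      Vb n (Btil S) w (gv 0 l + l0 • gv 1 l + c • gv 1 τ) (gv 0 l + l0 • gv 1 l + c • gv 1 τ)) ∧
    ∃ c : ℝ, l ⬝ᵥ (CInfo n S w τ l0 *ᵥ l) =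
      Vb n (Btil S) w (gv 0 l + l0 • gv 1 l + c • gv 1 τ) (gv 0 l + l0 • gv 1 l + c • gv 1 τ) := by
  have hM := Btil_isSymm hS
  have e : l ⬝ᵥ (CInfo n S w τ l0 *ᵥ l) =
      Vb n (Btil S) w (gv 0 l) (gv 0 l) + l0 * (2 * Vb n (Btil S) w (gv 0 l) (gv 1 l))
        + l0 ^ 2 * Vb n (Btil S) w (gv 1 l) (gv 1 l)
        - (Vb n (Btil S) w (gv 1 τ) (gv 1 τ))⁻¹ *
          (Vb n (Btil S) w (gv 0 l) (gv 1 τ) + l0 * Vb n (Btil S) w (gv 1 l) (gv 1 τ)) ^ 2 := by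
    unfold CInfo
    simp only [Matrix.sub_mulVec, Matrix.add_mulVec, Matrix.smul_mulVec, dotProduct_sub,
      dotProduct_add, dotProduct_smul, ← Matrix.mulVec_mulVec, Matrix.vecMulVec_mulVec,
      Matrix.mulVec_smul, op_smul_eq_smul, smul_eq_mul, CD_form]
    rw [Vb_comm n _ w (gv 1 l) (gv 0 l) hM, Vb_comm n _ w (gv 1 τ) (gv 0 l) hM,
      Vb_comm n _ w (gv 1 τ) (gv 1 l) hM]
    ring
  have q : ∀ c : ℝ, Vb n (Btil S) w (gv 0 l + l0 • gv 1 l + c • gv 1 τ)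
        (gv 0 l + l0 • gv 1 l + c • gv 1 τ) =
      Vb n (Btil S) w (gv 0 l) (gv 0 l) + l0 * (2 * Vb n (Btil S) w (gv 0 l) (gv 1 l))
        + l0 ^ 2 * Vb n (Btil S) w (gv 1 l) (gv 1 l)
        + 2 * c * (Vb n (Btil S) w (gv 0 l) (gv 1 τ) + l0 * Vb n (Btil S) w (gv 1 l) (gv 1 τ))
        + c ^ 2 * Vb n (Btil S) w (gv 1 τ) (gv 1 τ) := by
    intro c
    simp only [Vb_add_left, Vb_add_right, Vb_smul_left, Vb_smul_right _ _ _ _ _ _ hM]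
    rw [Vb_comm n _ w (gv 1 l) (gv 0 l) hM, Vb_comm n _ w (gv 1 τ) (gv 0 l) hM,
      Vb_comm n _ w (gv 1 τ) (gv 1 l) hM]
    ring
  rw [CD_form] at hZ
  rw [e]
  set Z := Vb n (Btil S) w (gv 1 τ) (gv 1 τ)
  set Y := Vb n (Btil S) w (gv 0 l) (gv 1 τ) + l0 * Vb n (Btil S) w (gv 1 l) (gv 1 τ)
  constructor
  · intro c
    rw [q]
    have h2 : 0 ≤ Z⁻¹ * (c * Z + Y) ^ 2 := by positivity
    have h3 : Z⁻¹ * (c * Z + Y) ^ 2 = c ^ 2 * Z + 2 * c * Y + Z⁻¹ * Y ^ 2 := by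
      field_simp; ring
    linarith
  · refine ⟨-(Y / Z), ?_⟩
    rw [q]
    field_simp; ring

theorem Smat_mul_transpose {t : ℕ} (σ : Equiv.Perm (Fin t)) :
    Smat σ * (Smat σ)ᵀ = 1 := by
  ext i j
  simp [Smat, Matrix.mul_apply, Matrix.one_apply, eq_comm]

theorem Smat_Bmat {t : ℕ} (σ : Equiv.Perm (Fin t)) : Smat σ * Bmat t = Bmat t * Smat σ := by
  have h : Smat σ * Jmat t = Jmat t * Smat σ := by
    ext i j
    have : ∀ x, (j = σ x) ↔ (x = σ⁻¹ j) := by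
      intro x
      constructor
      · rintro rfl; simp
      · rintro rfl; simp
    simp [Smat, Jmat, Matrix.mul_apply, this]
  simp [Bmat, Matrix.mul_sub, Matrix.sub_mul, h]

theorem ite_sum_aux {t : ℕ} (σ : Equiv.Perm (Fin t)) (u j : Fin t) :
    (if σ u = j then (1 : ℝ) else 0)
      = ∑ x, (if u = x then (1 : ℝ) else 0) * (if j = σ x then 1 else 0) := by
  simp only [ite_mul, one_mul, zero_mul, Finset.sum_ite_eq, Finset.mem_univ, if_true, eq_comm]

theorem Gmat_perm {p t : ℕ} (σ : Equiv.Perm (Fin t)) (i : Fin 2) (s : TrtSeq p t) :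
    Gmat i (permSeq σ s) = Gmat i s * Smat σ := by
  ext k j
  unfold Gmat
  split_ifs
  · simp only [Tmat, Smat, permSeq, Matrix.mul_apply, Matrix.of_apply]
    exact ite_sum_aux σ _ j
  · simp only [Fmat, Smat, permSeq, Matrix.mul_apply, Matrix.of_apply]
    by_cases hk : (k : ℕ) = 0
    · simp [hk]
    · simp only [hk, if_false]
      exact ite_sum_aux σ _ j

/-- relabelling as an equivalence of sequences -/
def permEquiv {p t : ℕ} (σ : Equiv.Perm (Fin t)) : TrtSeq p t ≃ TrtSeq p t where
  toFun := permSeq σ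
  invFun := permSeq σ⁻¹
  left_inv s := by funext k; simp [permSeq]
  right_inv s := by funext k; simp [permSeq]

theorem sum_permDesign {p t : ℕ} {E : Type*} [AddCommGroup E] [Module ℝ E]
    (σ : Equiv.Perm (Fin t)) (w : TrtSeq p t → ℝ) (f : TrtSeq p t → E) :
    ∑ s, permDesign σ w s • f s = ∑ s, w s • f (permSeq σ s) := by
  rw [← (permEquiv (p := p) σ).sum_comp]
  refine Finset.sum_congr rfl fun s _ => ?_
  have : permDesign σ w (permEquiv σ s) = w s := by
    show w ((permEquiv σ).symm (permEquiv σ s)) = w s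
    simp
  rw [this]; rfl

theorem gv_perm {p t : ℕ} (σ : Equiv.Perm (Fin t)) (i : Fin 2) (s : TrtSeq p t)
    (l : Fin t → ℝ) : gv i l (permSeq σ s) = gv i (Smat σ *ᵥ l) s := by
  rw [gv, gv, Gmat_perm, Matrix.mul_assoc, Smat_Bmat, ← Matrix.mul_assoc, Matrix.mulVec_mulVec]

theorem ext_form {t : ℕ} {A B : Matrix (Fin t) (Fin t) ℝ}
    (h : ∀ l m : Fin t → ℝ, l ⬝ᵥ (A *ᵥ m) = l ⬝ᵥ (B *ᵥ m)) : A = B := by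
  ext i j
  simpa using h (Pi.single i 1) (Pi.single j 1)

theorem CD_perm {p t : ℕ} (n : ℕ) (S : Matrix (Fin p) (Fin p) ℝ)
    (w : TrtSeq p t → ℝ) (i j : Fin 2) (σ : Equiv.Perm (Fin t)) :
    CD n S (permDesign σ w) i j = (Smat σ)ᵀ * CD n S w i j * Smat σ := by
  apply ext_form
  intro l m
  rw [← Matrix.mulVec_mulVec, ← Matrix.mulVec_mulVec,
    Matrix.dotProduct_mulVec l (Smat σ)ᵀ, Matrix.vecMul_transpose, CD_form, CD_form]
  have h := sum_permDesign σ w (fun s => gv i l s ⬝ᵥ (Btil S *ᵥ gv j m s))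
  simp only [smul_eq_mul] at h
  rw [Vb, h, sum_permDesign σ w, sum_permDesign σ w]
  simp only [gv_perm, Vb]

theorem CInfo_perm {p t : ℕ} (n : ℕ) (S : Matrix (Fin p) (Fin p) ℝ)
    (w : TrtSeq p t → ℝ) (τ : Fin t → ℝ) (l0 : ℝ) (σ : Equiv.Perm (Fin t)) :
    CInfo n S (permDesign σ w) τ l0 =
      (Smat σ)ᵀ * CInfo n S w (Smat σ *ᵥ τ) l0 * Smat σ := by
  have hz : τ ⬝ᵥ (((Smat σ)ᵀ * CD n S w 1 1 * Smat σ) *ᵥ τ) =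
      (Smat σ *ᵥ τ) ⬝ᵥ (CD n S w 1 1 *ᵥ (Smat σ *ᵥ τ)) := by
    rw [← Matrix.mulVec_mulVec, ← Matrix.mulVec_mulVec, Matrix.dotProduct_mulVec τ,
      Matrix.vecMul_transpose]
  have hv : vecMulVec (Smat σ *ᵥ τ) (Smat σ *ᵥ τ) = Smat σ * vecMulVec τ τ * (Smat σ)ᵀ := by
    rw [Matrix.mul_vecMulVec, Matrix.vecMulVec_mul, Matrix.vecMul_transpose]
  unfold CInfo
  simp only [CD_perm, hz, hv]
  simp only [Matrix.mul_add, Matrix.add_mul, Matrix.mul_sub, Matrix.sub_mul, Matrix.mul_smul,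
    Matrix.smul_mul, Matrix.mul_assoc, smul_add]

theorem permSeq_mul {p t : ℕ} (σ ρ : Equiv.Perm (Fin t)) (s : TrtSeq p t) :
    permSeq σ (permSeq ρ s) = permSeq (σ * ρ) s := rfl

theorem symmetrize_symm {p t : ℕ} (w : TrtSeq p t → ℝ) : IsSymmetricDesign (symmetrize w) := by
  intro σ s
  unfold symmetrize
  congr 1
  rw [← Fintype.sum_equiv (Equiv.mulLeft σ) _ _ (fun _ => rfl)]
  refine Finset.sum_congr rfl fun ρ _ => ?_
  simp [permDesign, permSeq_mul]

theorem permDesign_symmetrize {p t : ℕ} (w : TrtSeq p t → ℝ) (σ : Equiv.Perm (Fin t)) :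
    permDesign σ (symmetrize w) = symmetrize w := by
  funext s
  exact symmetrize_symm w σ⁻¹ s

theorem symmetrize_eq {p t : ℕ} (w : TrtSeq p t → ℝ) :
    symmetrize w = ∑ σ : Equiv.Perm (Fin t), ((Nat.factorial t : ℝ))⁻¹ • permDesign σ w := by
  funext s
  simp [symmetrize, Finset.sum_apply, Finset.mul_sum]

theorem sum_weights (t : ℕ) : ∑ _σ : Equiv.Perm (Fin t), ((Nat.factorial t : ℝ))⁻¹ = 1 := by
  have : (Nat.factorial t : ℝ) ≠ 0 := by positivity
  simp [Fintype.card_perm, this]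

/-- for any concave, permutation-invariant, Loewner-monotone criterion,
the symmetrized design is at least as good as `d` for the discrete symmetrized prior. -/
theorem stmt2 (p t n : ℕ) (hp : 2 ≤ p) (ht : 3 ≤ t) (hn : 1 ≤ n)
    (S : Matrix (Fin p) (Fin p) ℝ) (hS : S.PosDef)
    (Phi : Matrix (Fin t) (Fin t) ℝ → ℝ)
    (hconc : ∀ A B : Matrix (Fin t) (Fin t) ℝ, A.IsSymm → B.IsSymm →
      ∀ a b : ℝ, 0 ≤ a → 0 ≤ b → a + b = 1 →
        a * Phi A + b * Phi B ≤ Phi (a • A + b • B))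
    (hinv : ∀ (σ : Equiv.Perm (Fin t)) (C : Matrix (Fin t) (Fin t) ℝ),
      Phi ((Smat σ)ᵀ * C * Smat σ) = Phi C)
    (hmono : ∀ A B : Matrix (Fin t) (Fin t) ℝ, A.IsSymm → B.IsSymm →
      (B - A).PosSemidef → Phi A ≤ Phi B)
    (l0 : ℝ) (τ0 : Fin t → ℝ) (hτsum : (∑ i, τ0 i) = 0) (hτ0 : τ0 ≠ 0)
    (w : TrtSeq p t → ℝ) (hw : IsDesign w)
    (hC : ∀ σ : Equiv.Perm (Fin t),
      0 < (Smat σ *ᵥ τ0) ⬝ᵥ (CD n S w 1 1 *ᵥ (Smat σ *ᵥ τ0))) :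
    IsSymmetricDesign (symmetrize w) ∧
    (∀ σ : Equiv.Perm (Fin t),
      0 < (Smat σ *ᵥ τ0) ⬝ᵥ (CD n S (symmetrize w) 1 1 *ᵥ (Smat σ *ᵥ τ0))) ∧
    ((Nat.factorial t : ℝ))⁻¹ *
        ∑ σ : Equiv.Perm (Fin t), Phi (CInfo n S w (Smat σ *ᵥ τ0) l0) ≤
      ((Nat.factorial t : ℝ))⁻¹ *
        ∑ σ : Equiv.Perm (Fin t), Phi (CInfo n S (symmetrize w) (Smat σ *ᵥ τ0) l0) := by
  have hM := Btil_isSymm hS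
  have hN := Btil_nonneg hp hS
  have hk : ∀ σ ∈ (Finset.univ : Finset (Equiv.Perm (Fin t))),
      (0 : ℝ) ≤ ((Nat.factorial t : ℝ))⁻¹ := fun _ _ => by positivity
  have hV : ∀ a : TrtSeq p t → Fin p → ℝ,
      ∑ σ : Equiv.Perm (Fin t), ((Nat.factorial t : ℝ))⁻¹ * Vb n (Btil S) (permDesign σ w) a a
        ≤ Vb n (Btil S) (symmetrize w) a a := by
    intro a
    have := (Vb_concave n (Btil S) hM hN a).le_map_sum (t := Finset.univ)
      (p := fun σ : Equiv.Perm (Fin t) => permDesign σ w) hk (sum_weights t)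
      (fun _ _ => Set.mem_univ _)
    simpa only [← symmetrize_eq, smul_eq_mul] using this
  have hzform : ∀ (u : TrtSeq p t → ℝ) (σ : Equiv.Perm (Fin t)),
      τ0 ⬝ᵥ (CD n S (permDesign σ u) 1 1 *ᵥ τ0) =
        (Smat σ *ᵥ τ0) ⬝ᵥ (CD n S u 1 1 *ᵥ (Smat σ *ᵥ τ0)) := by
    intro u σ
    rw [CD_perm, ← Matrix.mulVec_mulVec, ← Matrix.mulVec_mulVec, Matrix.dotProduct_mulVec τ0,
      Matrix.vecMul_transpose]
  have hZσ : ∀ σ, 0 < τ0 ⬝ᵥ (CD n S (permDesign σ w) 1 1 *ᵥ τ0) := by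
    intro σ; rw [hzform]; exact hC σ
  have hZ : 0 < τ0 ⬝ᵥ (CD n S (symmetrize w) 1 1 *ᵥ τ0) := by
    rw [CD_form]
    refine lt_of_lt_of_le ?_ (hV _)
    refine Finset.sum_pos (fun σ _ => ?_) Finset.univ_nonempty
    rw [← CD_form]
    exact mul_pos (by positivity) (hZσ σ)
  refine ⟨symmetrize_symm w, ?_, ?_⟩
  · intro σ
    rw [← hzform, permDesign_symmetrize]
    exact hZ
  have hR : ∀ σ : Equiv.Perm (Fin t), Phi (CInfo n S (symmetrize w) (Smat σ *ᵥ τ0) l0) =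
      Phi (CInfo n S (symmetrize w) τ0 l0) := by
    intro σ
    rw [← hinv σ, ← CInfo_perm, permDesign_symmetrize]
  have hL : ∀ σ : Equiv.Perm (Fin t), Phi (CInfo n S w (Smat σ *ᵥ τ0) l0) =
      Phi (CInfo n S (permDesign σ w) τ0 l0) := by
    intro σ
    rw [← hinv σ, ← CInfo_perm]
  simp only [hR, hL, Finset.mul_sum]
  rw [← Finset.sum_mul, sum_weights, one_mul]
  have hconv : ConcaveOn ℝ {A : Matrix (Fin t) (Fin t) ℝ | A.IsSymm} Phi := by
    refine ⟨?_, ?_⟩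
    · intro A hA B hB a b _ _ _
      exact (Matrix.IsSymm.smul hA a).add (Matrix.IsSymm.smul hB b)
    · intro A hA B hB a b ha hb hab
      exact hconc A B hA hB a b ha hb hab
  have hsymσ : ∀ σ ∈ (Finset.univ : Finset (Equiv.Perm (Fin t))),
      CInfo n S (permDesign σ w) τ0 l0 ∈ {A : Matrix (Fin t) (Fin t) ℝ | A.IsSymm} :=
    fun σ _ => CInfo_symm n hS _ _ _
  have hJ := hconv.le_map_sum (t := Finset.univ)
      (p := fun σ : Equiv.Perm (Fin t) => CInfo n S (permDesign σ w) τ0 l0)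
      hk (sum_weights t) hsymσ
  have hsum : (∑ σ : Equiv.Perm (Fin t), ((Nat.factorial t : ℝ))⁻¹ •
      CInfo n S (permDesign σ w) τ0 l0).IsSymm :=
    hconv.1.sum_mem hk (sum_weights t) hsymσ
  have hstar := CInfo_symm n hS (symmetrize w) τ0 l0
  simp only [smul_eq_mul] at hJ
  refine hJ.trans (hmono _ _ hsum hstar ?_)
  refine Matrix.PosSemidef.of_dotProduct_mulVec_nonneg ?_ ?_
  · have := hstar.sub hsum
    rw [Matrix.IsHermitian, Matrix.conjTranspose_eq_transpose_of_trivial]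
    exact this
  · intro l
    simp only [star_trivial]
    rw [Matrix.sub_mulVec, dotProduct_sub, sub_nonneg, sum_mulVec_aux, dotProduct_sum]
    obtain ⟨c, hc⟩ := (CInfo_form n hS (symmetrize w) τ0 l0 l hZ).2
    rw [hc]
    refine le_trans (Finset.sum_le_sum fun σ _ => ?_) (hV _)
    rw [Matrix.smul_mulVec, dotProduct_smul, smul_eq_mul]
    exact mul_le_mul_of_nonneg_left
      ((CInfo_form n hS (permDesign σ w) τ0 l0 l (hZσ σ)).1 c) (by positivity)
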